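/- Let ψ be a regular N-function satisfying the Δ₂-condition, and for a ≥ 0 set ψ'_a(t) := ψ'(a+t)·t/(a+t). Then there exist constants c, C > 0, depending only on Δ₂(ψ), such that for every d, n ≥ 1 and all P, Q ∈ ℝ^{d×n}: c·ψ'_{|P|}(|P−Q|) ≤ ψ'_{|Q|}(|P−Q|) ≤ C·ψ'_{|P|}(|P−Q|), where |·| denotes the Frobenius norm on ℝ^{d×n}. -/

import Mathlib

open Real Filter Set Topology

noncomputable section

/-- An N-function: convex on `[0,∞)`, vanishing at `0`, positive on `(0,∞)`,
with `ψ t / t → 0` as `t → 0⁺` and `ψ t / t → ∞` as `t → ∞`. -/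
def IsNFunction (ψ : ℝ → ℝ) : Prop :=
  ConvexOn ℝ (Set.Ici 0) ψ ∧ ψ 0 = 0 ∧ (∀ t > 0, 0 < ψ t) ∧
    Filter.Tendsto (fun t => ψ t / t) (nhdsWithin 0 (Set.Ioi 0)) (nhds 0) ∧
    Filter.Tendsto (fun t => ψ t / t) Filter.atTop Filter.atTop

/-- A regular N-function: an N-function which is `C¹` on `[0,∞)`, `C²` on `(0,∞)`,
with `ψ'' t > 0` for all `t > 0`. -/
def IsRegularNFunction (ψ : ℝ → ℝ) : Prop :=
  IsNFunction ψ ∧ ContDiffOn ℝ 1 ψ (Set.Ici 0) ∧ ContDiffOn ℝ 2 ψ (Set.Ioi 0) ∧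
    ∀ t > 0, 0 < deriv (deriv ψ) t

/-- A balanced N-function with characteristics `(γ₁, γ₂)`. -/
def IsBalancedNFunction (ψ : ℝ → ℝ) (γ₁ γ₂ : ℝ) : Prop :=
  IsRegularNFunction ψ ∧ 0 < γ₁ ∧ γ₁ ≤ 1 ∧ 1 ≤ γ₂ ∧
    ∀ t > 0, γ₁ * deriv ψ t ≤ t * deriv (deriv ψ) t ∧
      t * deriv (deriv ψ) t ≤ γ₂ * deriv ψ t

/-- The conjugate N-function `ψ*(t) = sup_{s ≥ 0} (s·t − ψ(s))`. -/
def conjNF (ψ : ℝ → ℝ) (t : ℝ) : ℝ :=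
  ⨆ s : Set.Ici (0:ℝ), ((s : ℝ) * t - ψ s)

/-- `ψ` satisfies the Δ₂-condition with constant `K`. -/
def SatisfiesDelta2 (ψ : ℝ → ℝ) (K : ℝ) : Prop :=
  2 < K ∧ ∀ t ≥ (0:ℝ), ψ (2 * t) ≤ K * ψ t

/-- The derivative `ψ'_a(t) = ψ'(a+t)·t/(a+t)` of the shifted N-function. -/
def shiftDF (ψ : ℝ → ℝ) (a t : ℝ) : ℝ := deriv ψ (a + t) * t / (a + t)

/-- The shifted N-function `ψ_a(t) = ∫₀ᵗ ψ'(a+s)·s/(a+s) ds`. -/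
def shiftNF (ψ : ℝ → ℝ) (a t : ℝ) : ℝ := ∫ s in (0:ℝ)..t, shiftDF ψ a s

/-- Frobenius norm of a `d×n` real matrix. -/
def frobNorm {d n : ℕ} (P : Fin d → Fin n → ℝ) : ℝ :=
  Real.sqrt (∑ i : Fin d, ∑ j : Fin n, (P i j) ^ 2)

/-- Frobenius inner product `P : Q` of two `d×n` real matrices. -/
def frobInner {d n : ℕ} (P Q : Fin d → Fin n → ℝ) : ℝ :=
  ∑ i : Fin d, ∑ j : Fin n, P i j * Q i j

/-- `F(P) = √(φ'(|P|)/|P|)·P` (equal to `0` at `P = 0`). -/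
def FmapNF (φ : ℝ → ℝ) {d n : ℕ} (P : Fin d → Fin n → ℝ) : Fin d → Fin n → ℝ :=
  Real.sqrt (deriv φ (frobNorm P) / frobNorm P) • P

/-- `F*(P) = √((φ*)'(|P|)/|P|)·P` (equal to `0` at `P = 0`). -/
def FstarNF (φ : ℝ → ℝ) {d n : ℕ} (P : Fin d → Fin n → ℝ) : Fin d → Fin n → ℝ :=
  Real.sqrt (deriv (conjNF φ) (frobNorm P) / frobNorm P) • P

/-- The standard basis matrix with a `1` in entry `(k,l)`. -/
def basisMat {d n : ℕ} (k : Fin d) (l : Fin n) : Fin d → Fin n → ℝ :=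
  fun i j => if i = k ∧ j = l then 1 else 0

/-- `𝒜` has `φ`-structure with constants `(γ₃, γ₄)`. -/
def HasPhiStructure {d n : ℕ} (A : (Fin d → Fin n → ℝ) → (Fin d → Fin n → ℝ))
    (φ : ℝ → ℝ) (γ₃ γ₄ : ℝ) : Prop :=
  0 < γ₃ ∧ γ₃ ≤ 1 ∧ 1 < γ₄ ∧ Continuous A ∧
    ContDiffOn ℝ 1 A {P | P ≠ 0} ∧ A 0 = 0 ∧
    (∀ P : Fin d → Fin n → ℝ, P ≠ 0 → ∀ Q : Fin d → Fin n → ℝ,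
      γ₃ * (deriv φ (frobNorm P) / frobNorm P) * (frobNorm Q) ^ 2 ≤
        ∑ i : Fin d, ∑ j : Fin n, ∑ k : Fin d, ∑ l : Fin n,
          fderiv ℝ A P (basisMat k l) i j * Q i j * Q k l) ∧
    (∀ P : Fin d → Fin n → ℝ, P ≠ 0 → ∀ (i k : Fin d) (j l : Fin n),
      |fderiv ℝ A P (basisMat k l) i j| ≤ γ₄ * (deriv φ (frobNorm P) / frobNorm P))

/-!
For convex `ψ` with `ψ 0 = 0`, the slopes of `ψ` over `[0, x]` and `[x, 2 x]` enclose `ψ' x`, so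
`ψ x ≤ x ψ' x ≤ ψ (2 x) - ψ x`, and the Δ₂-condition makes the outer terms comparable. Thus `ψ'`
inherits a doubling property, and since it is monotone, `ψ' x / x` and `ψ' y / y` are comparable
whenever `x` and `y` agree up to a factor of two. By the triangle inequality this is the case for
`x = |P| + |P - Q|` and `y = |Q| + |P - Q|`.
-/

section Convex

variable {ψ : ℝ → ℝ} {x : ℝ}

theorem sub_le_mul_deriv_of_convexOn (hconv : ConvexOn ℝ (Ici 0) ψ) (hdiff : DifferentiableAt ℝ ψ x)
    (hx : 0 < x) : ψ x - ψ 0 ≤ x * deriv ψ x := by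
  have hslope := hconv.slope_le_deriv self_mem_Ici hx.le hx hdiff
  rwa [slope_def_field, sub_zero, div_le_iff₀' hx] at hslope

theorem mul_deriv_le_sub_of_convexOn (hconv : ConvexOn ℝ (Ici 0) ψ) (hdiff : DifferentiableAt ℝ ψ x)
    (hx : 0 < x) : x * deriv ψ x ≤ ψ (2 * x) - ψ x := by
  have hlt : x < 2 * x := by linarith
  have hslope := hconv.deriv_le_slope hx.le (hx.trans hlt).le hlt hdiff
  rwa [slope_def_field, two_mul, add_sub_cancel_right, ← two_mul, le_div_iff₀' hx] at hslope

theorem two_mul_le_add_of_convexOn (hconv : ConvexOn ℝ (Ici 0) ψ) (hx : 0 ≤ x) :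
    2 * ψ x ≤ ψ 0 + ψ (2 * x) := by
  have hmid := hconv.2 self_mem_Ici (mem_Ici.2 (by positivity : 0 ≤ 2 * x))
    (by norm_num : (0 : ℝ) ≤ 1 / 2) (by norm_num : (0 : ℝ) ≤ 1 / 2) (by norm_num)
  rw [show (1 / 2 : ℝ) • (0 : ℝ) + (1 / 2 : ℝ) • (2 * x) = x by simp] at hmid
  simp only [smul_eq_mul] at hmid
  linarith

end Convex

section Delta2

variable {ψ : ℝ → ℝ} {K x y : ℝ}

theorem SatisfiesDelta2.nonneg (hK : SatisfiesDelta2 ψ K) (hconv : ConvexOn ℝ (Ici 0) ψ)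
    (h0 : ψ 0 = 0) (hx : 0 ≤ x) : 0 ≤ ψ x := by
  have hmid := two_mul_le_add_of_convexOn hconv hx
  have hprod : 0 ≤ (K - 2) * ψ x := by linarith [hK.2 x hx]
  exact nonneg_of_mul_nonneg_right hprod (sub_pos.2 hK.1)

theorem SatisfiesDelta2.mul_deriv_le (hK : SatisfiesDelta2 ψ K) (hconv : ConvexOn ℝ (Ici 0) ψ)
    (hdiff : DifferentiableAt ℝ ψ x) (hx : 0 < x) : x * deriv ψ x ≤ (K - 1) * ψ x := by
  linarith [mul_deriv_le_sub_of_convexOn hconv hdiff hx, hK.2 x hx.le]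

theorem SatisfiesDelta2.deriv_nonneg (hK : SatisfiesDelta2 ψ K) (hconv : ConvexOn ℝ (Ici 0) ψ)
    (h0 : ψ 0 = 0) (hdiff : DifferentiableAt ℝ ψ x) (hx : 0 < x) : 0 ≤ deriv ψ x := by
  have hslope := sub_le_mul_deriv_of_convexOn hconv hdiff hx
  rw [h0, sub_zero] at hslope
  exact nonneg_of_mul_nonneg_right ((hK.nonneg hconv h0 hx.le).trans hslope) hx

theorem SatisfiesDelta2.deriv_two_mul_le (hK : SatisfiesDelta2 ψ K)
    (hconv : ConvexOn ℝ (Ici 0) ψ) (h0 : ψ 0 = 0) (hdiff : DifferentiableOn ℝ ψ (Ioi 0))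
    (hx : 0 < x) : 2 * deriv ψ (2 * x) ≤ K * (K - 1) * deriv ψ x := by
  have hK2 := hK.1
  have hdiffAt {s : ℝ} (hs : 0 < s) : DifferentiableAt ℝ ψ s :=
    hdiff.differentiableAt (Ioi_mem_nhds hs)
  have hslope := sub_le_mul_deriv_of_convexOn hconv (hdiffAt hx) hx
  rw [h0, sub_zero] at hslope
  refine le_of_mul_le_mul_left ?_ hx
  calc x * (2 * deriv ψ (2 * x)) = 2 * x * deriv ψ (2 * x) := by ring
    _ ≤ (K - 1) * ψ (2 * x) := hK.mul_deriv_le hconv (hdiffAt (by positivity)) (by positivity)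
    _ ≤ (K - 1) * (K * ψ x) := mul_le_mul_of_nonneg_left (hK.2 x hx.le) (by linarith)
    _ ≤ (K - 1) * (K * (x * deriv ψ x)) := by
      have hcoeff : 0 ≤ (K - 1) * K := mul_nonneg (by linarith) (by linarith)
      simpa only [mul_assoc] using mul_le_mul_of_nonneg_left hslope hcoeff
    _ = x * (K * (K - 1) * deriv ψ x) := by ring

theorem SatisfiesDelta2.deriv_div_le (hK : SatisfiesDelta2 ψ K) (hconv : ConvexOn ℝ (Ici 0) ψ)
    (h0 : ψ 0 = 0) (hdiff : DifferentiableOn ℝ ψ (Ioi 0)) (hx : 0 < x) (hy : 0 < y)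
    (hyx : y ≤ 2 * x) (hxy : x ≤ 2 * y) :
    deriv ψ y / y ≤ K * (K - 1) * (deriv ψ x / x) := by
  have hdiffAt : ∀ s ∈ Ioi (0 : ℝ), DifferentiableAt ℝ ψ s := fun s hs =>
    hdiff.differentiableAt (Ioi_mem_nhds hs)
  have hmono : deriv ψ y ≤ deriv ψ (2 * x) :=
    (hconv.subset Ioi_subset_Ici_self (convex_Ioi 0)).monotoneOn_deriv hdiffAt hy
      (hy.trans_le hyx) hyx
  have hnonneg : 0 ≤ deriv ψ y := hK.deriv_nonneg hconv h0 (hdiffAt y hy) hy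
  rw [← mul_div_assoc, div_le_div_iff₀ hy hx]
  calc deriv ψ y * x ≤ deriv ψ y * (2 * y) := mul_le_mul_of_nonneg_left hxy hnonneg
    _ = 2 * deriv ψ y * y := by ring
    _ ≤ 2 * deriv ψ (2 * x) * y := by gcongr
    _ ≤ K * (K - 1) * deriv ψ x * y :=
      mul_le_mul_of_nonneg_right (hK.deriv_two_mul_le hconv h0 hdiff hx) hy.le

theorem SatisfiesDelta2.shiftDF_le (hK : SatisfiesDelta2 ψ K) (hconv : ConvexOn ℝ (Ici 0) ψ)
    (h0 : ψ 0 = 0) (hdiff : DifferentiableOn ℝ ψ (Ioi 0)) {a b t : ℝ} (ha : 0 ≤ a) (hb : 0 ≤ b)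
    (hab : |a - b| ≤ t) : shiftDF ψ b t ≤ K * (K - 1) * shiftDF ψ a t := by
  obtain ⟨hba, hab'⟩ := abs_le.1 hab
  rcases ((abs_nonneg _).trans hab).eq_or_lt with rfl | ht
  · simp [shiftDF]
  · have hdiv : deriv ψ (b + t) / (b + t) ≤ K * (K - 1) * (deriv ψ (a + t) / (a + t)) :=
      hK.deriv_div_le hconv h0 hdiff (by linarith) (by linarith) (by linarith) (by linarith)
    simp only [shiftDF, mul_div_right_comm, ← mul_assoc] at hdiv ⊢
    exact mul_le_mul_of_nonneg_right hdiv ht.le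

end Delta2

section Frobenius

open scoped Matrix.Norms.Frobenius

variable {d n : ℕ}

theorem frobNorm_eq_norm (P : Fin d → Fin n → ℝ) : frobNorm P = ‖Matrix.of P‖ := by
  simp [frobNorm, Matrix.frobenius_norm_def, Real.sqrt_eq_rpow]

theorem abs_frobNorm_sub_frobNorm_le (P Q : Fin d → Fin n → ℝ) :
    |frobNorm P - frobNorm Q| ≤ frobNorm (P - Q) := by
  simpa only [frobNorm_eq_norm, ← Matrix.of_sub_of] using
    abs_norm_sub_norm_le (Matrix.of P) (Matrix.of Q)

end Frobenius

theorem shift_deriv_equiv_general (K : ℝ) :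
    ∃ c > (0 : ℝ), ∃ C > (0 : ℝ), ∀ ψ : ℝ → ℝ, ConvexOn ℝ (Ici 0) ψ → ψ 0 = 0 →
      DifferentiableOn ℝ ψ (Ioi 0) → SatisfiesDelta2 ψ K →
      ∀ a b t : ℝ, 0 ≤ a → 0 ≤ b → |a - b| ≤ t →
        c * shiftDF ψ a t ≤ shiftDF ψ b t ∧ shiftDF ψ b t ≤ C * shiftDF ψ a t := by
  rcases le_or_gt K 2 with hK2 | hK2
  · exact ⟨1, one_pos, 1, one_pos, fun _ _ _ _ hK => absurd hK.1 hK2.not_gt⟩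
  have hC : 0 < K * (K - 1) := mul_pos (by linarith) (by linarith)
  refine ⟨(K * (K - 1))⁻¹, inv_pos.2 hC, K * (K - 1), hC, ?_⟩
  intro ψ hconv h0 hdiff hK a b t ha hb hab
  have hba : |b - a| ≤ t := abs_sub_comm a b ▸ hab
  exact ⟨(inv_mul_le_iff₀ hC).2 (hK.shiftDF_le hconv h0 hdiff hb ha hba),
    hK.shiftDF_le hconv h0 hdiff ha hb hab⟩

/-- `ψ'_{|Q|}(|P−Q|) ∼ ψ'_{|P|}(|P−Q|)` uniformly in `P, Q`, with
constants depending only on the Δ₂-constant of `ψ`. -/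
theorem shift_deriv_equiv (K₁ : ℝ) :
    ∃ c > (0:ℝ), ∃ C > (0:ℝ), ∀ ψ : ℝ → ℝ, IsRegularNFunction ψ → SatisfiesDelta2 ψ K₁ →
      ∀ d n : ℕ, 1 ≤ d → 1 ≤ n → ∀ P Q : Fin d → Fin n → ℝ,
        c * shiftDF ψ (frobNorm P) (frobNorm (P - Q)) ≤
            shiftDF ψ (frobNorm Q) (frobNorm (P - Q)) ∧
          shiftDF ψ (frobNorm Q) (frobNorm (P - Q)) ≤
            C * shiftDF ψ (frobNorm P) (frobNorm (P - Q)) := by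
  obtain ⟨c, hc, C, hC, hequiv⟩ := shift_deriv_equiv_general K₁
  exact ⟨c, hc, C, hC, fun ψ hψ hK _ _ _ _ P Q =>
    hequiv ψ hψ.1.1 hψ.1.2.1 (hψ.2.2.1.differentiableOn two_ne_zero) hK _ _ _
      (Real.sqrt_nonneg _) (Real.sqrt_nonneg _) (abs_frobNorm_sub_frobNorm_le P Q)⟩

end
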